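/- Let f : ℝⁿ → ℝ be a continuously differentiable convex function with global minimizer x*, and let x : (0,∞) → ℝⁿ be a twice differentiable solution of ẍ(t) + (3/t)·ẋ(t) + ∇f(x(t)) = 0 for all t > 0. Then f(x(t)) − f(x*) = O(1/t²) as t → ∞. -/

import Mathlib

open scoped RealInnerProductSpace

/-!
For friction `α / t`, the vector `(α - 1) • (x - p) + t • ẋ` moves with velocity `-t • ∇f(x)`: the
friction cancels. Adding half its squared norm to `t² (f(x) - f(p))` therefore cancels the terms in
`⟪∇f(x), ẋ⟫`, and the resulting energy (Su, Boyd and Candès) has derivative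
`t (2 (f(x) - f(p)) - (α - 1) ⟪∇f(x), x - p⟫)`. Convexity of `f` makes this nonpositive for `α = 3`,
and for all `α ≥ 3` if `p` is a minimizer, so that `t² (f(x) - f(p))` stays below any earlier value
of the energy.
-/

section NagFlow

variable {E : Type*} [NormedAddCommGroup E]

theorem hasDerivAt_smul_sub_add_smul_of_nag_flow [NormedSpace ℝ E] {α t : ℝ} {x v : ℝ → E}
    {a g : E} (p : E) (ht : t ≠ 0) (hx : HasDerivAt x (v t) t) (hv : HasDerivAt v a t)
    (hode : a + (α / t) • v t + g = 0) :
    HasDerivAt (fun s => (α - 1) • (x s - p) + s • v s) (-(t • g)) t := by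
  have ha : a = -((α / t) • v t + g) := by
    rwa [add_assoc, add_eq_zero_iff_eq_neg] at hode
  refine (((hx.sub_const p).const_smul (α - 1)).add ((hasDerivAt_id t).smul hv)).congr_deriv ?_
  rw [ha, id]
  match_scalars <;> field_simp
  ring

variable [InnerProductSpace ℝ E]

/-- The Lyapunov function of the flow `ẍ + (α / t) ẋ + ∇f(x) = 0` relative to an arbitrary
comparison point `p`, whose decrease bounds `f(x) - f(p)`. The curve `v` stands for `ẋ`. -/
noncomputable def nagEnergy (α : ℝ) (f : E → ℝ) (p : E) (x v : ℝ → E) (t : ℝ) : ℝ :=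
  t ^ 2 * (f (x t) - f p) + ‖(α - 1) • (x t - p) + t • v t‖ ^ 2 / 2

theorem sub_le_nagEnergy_div_sq (α : ℝ) (f : E → ℝ) (p : E) (x v : ℝ → E) {t : ℝ} (ht : t ≠ 0) :
    f (x t) - f p ≤ nagEnergy α f p x v t / t ^ 2 := by
  rw [le_div_iff₀' (by positivity), nagEnergy]
  exact le_add_of_nonneg_right (by positivity)

variable [CompleteSpace E]

theorem hasDerivAt_nagEnergy {α t : ℝ} {f : E → ℝ} {x v : ℝ → E} {a : E} (p : E) (ht : t ≠ 0)
    (hf : DifferentiableAt ℝ f (x t)) (hx : HasDerivAt x (v t) t) (hv : HasDerivAt v a t)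
    (hode : a + (α / t) • v t + gradient f (x t) = 0) :
    HasDerivAt (nagEnergy α f p x v)
      (t * (2 * (f (x t) - f p) - (α - 1) * ⟪gradient f (x t), x t - p⟫)) t := by
  have hfx : HasDerivAt (fun s => f (x s)) ⟪gradient f (x t), v t⟫ t := by
    simpa [Function.comp_def] using hf.hasFDerivAt.comp_hasDerivAt t hx
  have hpotential := (hasDerivAt_pow 2 t).mul (hfx.sub_const (f p))
  have hkinetic :=
    ((hasDerivAt_smul_sub_add_smul_of_nag_flow p ht hx hv hode).norm_sq).div_const 2
  have hinner : ⟪(α - 1) • (x t - p) + t • v t, -(t • gradient f (x t))⟫ =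
      -t * ((α - 1) * ⟪gradient f (x t), x t - p⟫ + t * ⟪gradient f (x t), v t⟫) := by
    rw [← neg_smul, real_inner_smul_right, real_inner_comm, inner_add_right,
      real_inner_smul_right, real_inner_smul_right]
  refine (hpotential.add hkinetic).congr_deriv ?_
  rw [hinner]
  push_cast
  ring

theorem antitoneOn_nagEnergy {α t₀ : ℝ} {f : E → ℝ} {p : E} {x v a : ℝ → E} (ht₀ : 0 ≤ t₀)
    (hf : ∀ t, t₀ < t → DifferentiableAt ℝ f (x t))
    (hx : ∀ t, t₀ < t → HasDerivAt x (v t) t) (hv : ∀ t, t₀ < t → HasDerivAt v (a t) t)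
    (hode : ∀ t, t₀ < t → a t + (α / t) • v t + gradient f (x t) = 0)
    (hgrad : ∀ t, t₀ < t → 2 * (f (x t) - f p) ≤ (α - 1) * ⟪gradient f (x t), x t - p⟫) :
    AntitoneOn (nagEnergy α f p x v) (Set.Ioi t₀) := by
  have hderiv (t : ℝ) (ht : t₀ < t) :=
    hasDerivAt_nagEnergy p (ht₀.trans_lt ht).ne' (hf t ht) (hx t ht) (hv t ht) (hode t ht)
  refine antitoneOn_of_hasDerivWithinAt_nonpos (convex_Ioi t₀)
    (fun t ht => (hderiv t ht).continuousAt.continuousWithinAt)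
    (fun t ht => (hderiv t (interior_subset ht)).hasDerivWithinAt) fun t ht => ?_
  have ht : t₀ < t := interior_subset ht
  exact mul_nonpos_of_nonneg_of_nonpos (ht₀.trans ht.le) (sub_nonpos.2 (hgrad t ht))

theorem nag_flow_convex_rate_general {α t₀ : ℝ} {f : E → ℝ} {p : E} {x v a : ℝ → E}
    (ht₀ : 0 ≤ t₀) (hf : ∀ t, t₀ < t → DifferentiableAt ℝ f (x t))
    (hx : ∀ t, t₀ < t → HasDerivAt x (v t) t) (hv : ∀ t, t₀ < t → HasDerivAt v (a t) t)
    (hode : ∀ t, t₀ < t → a t + (α / t) • v t + gradient f (x t) = 0)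
    (hgrad : ∀ t, t₀ < t → 2 * (f (x t) - f p) ≤ (α - 1) * ⟪gradient f (x t), x t - p⟫)
    {s t : ℝ} (hs : t₀ < s) (hst : s ≤ t) :
    f (x t) - f p ≤ nagEnergy α f p x v s / t ^ 2 := by
  have ht : t₀ < t := hs.trans_le hst
  calc
    f (x t) - f p ≤ nagEnergy α f p x v t / t ^ 2 :=
      sub_le_nagEnergy_div_sq α f p x v (ht₀.trans_lt ht).ne'
    _ ≤ nagEnergy α f p x v s / t ^ 2 := by
      gcongr
      exact antitoneOn_nagEnergy ht₀ hf hx hv hode hgrad hs ht hst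

end NagFlow

/-- For a continuously differentiable convex `f` with minimizer `x*`,
any twice differentiable solution (on `(0,∞)`) of the NAG flow
`ẍ(t) + (3/t)·ẋ(t) + ∇f(x(t)) = 0` satisfies `f(x(t)) − f(x*) = O(1/t²)` as `t → ∞`. -/
theorem nag_flow_convex_rate {n : ℕ}
    (f : EuclideanSpace ℝ (Fin n) → ℝ)
    (xstar : EuclideanSpace ℝ (Fin n))
    (hf : ContDiff ℝ 1 f)
    (hmin : ∀ y, f xstar ≤ f y)
    (hconv : ∀ y z : EuclideanSpace ℝ (Fin n),
      f z ≥ f y + ⟪gradient f y, z - y⟫)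
    (x v a : ℝ → EuclideanSpace ℝ (Fin n))
    (hx : ∀ t : ℝ, 0 < t → HasDerivAt x (v t) t)
    (hv : ∀ t : ℝ, 0 < t → HasDerivAt v (a t) t)
    (hode : ∀ t : ℝ, 0 < t → a t + (3 / t) • v t + gradient f (x t) = 0) :
    ∃ T C : ℝ, 0 < T ∧ 0 < C ∧
      ∀ t : ℝ, T ≤ t → f (x t) - f xstar ≤ C / t ^ 2 := by
  have hgrad (t : ℝ) : 2 * (f (x t) - f xstar) ≤ (3 - 1) * ⟪gradient f (x t), x t - xstar⟫ := by
    have h := hconv (x t) xstar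
    rw [← neg_sub (x t) xstar, inner_neg_right] at h
    linarith
  have hrate {t : ℝ} (ht : 1 ≤ t) : f (x t) - f xstar ≤ nagEnergy 3 f xstar x v 1 / t ^ 2 :=
    nag_flow_convex_rate_general le_rfl (fun t _ => hf.differentiable one_ne_zero (x t)) hx hv
      hode (fun t _ => hgrad t) one_pos ht
  exact ⟨1, max (nagEnergy 3 f xstar x v 1) 1, one_pos, by positivity,
    fun t ht => (hrate ht).trans (by gcongr; exact le_max_left _ _)⟩
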